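/- For every finite simple graph G on n vertices and every k ≥ 1, ϑ_k(G) ≤ ϑ_{k+1}(G); moreover, equality ϑ_k(G) = ϑ_{k+1}(G) holds if and only if ϑ_k(G) = n. -/

import Mathlib

open Finset

/-- The sum of the `k` largest eigenvalues (counted with multiplicity) of a
Hermitian real matrix, realized as the supremum over all choices of
`min k n` eigenvalues of their sum. -/
noncomputable def sumKEig {V : Type*} [Fintype V] [DecidableEq V] (k : ℕ)
    (A : Matrix V V ℝ) (hA : A.IsHermitian) : ℝ :=
  sSup {x : ℝ | ∃ s : Finset V, s.card = min k (Fintype.card V) ∧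
    x = ∑ i ∈ s, hA.eigenvalues i}

/-- The generalized theta number `ϑ_k(G)`: the infimum of the sum of the `k`
largest eigenvalues over all real symmetric matrices `A` with `A i j = 1`
whenever `(i,j)` is not an edge of `G`. -/
noncomputable def gtheta {V : Type*} [Fintype V] [DecidableEq V]
    (k : ℕ) (G : SimpleGraph V) : ℝ :=
  sInf {x : ℝ | ∃ (A : Matrix V V ℝ) (hA : A.IsHermitian),
    (∀ i j, ¬ G.Adj i j → A i j = 1) ∧ x = sumKEig k A hA}

/-!
Write `S k` for the sum of the `k` largest eigenvalues of `A ∈ 𝒜(G)`. Adjoining any one of the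
`n - k` remaining eigenvalues to the `k` largest gives at most `S (k + 1)`; summing over these
choices and using `trace A = n` gives `n - S k ≤ (n - k) (S (k + 1) - S k)`. The inequality survives
the infimum over `A`, so `n - ϑ_k ≤ (n - k) (ϑ_{k+1} - ϑ_k)`. The all-ones matrix shows `ϑ_k ≤ n`.
Hence `ϑ_k ≤ ϑ_{k+1}`, and `ϑ_k = ϑ_{k+1}` forces `n ≤ ϑ_k`.
-/

section SumKEig

variable {V : Type*} [Fintype V] [DecidableEq V] {A : Matrix V V ℝ}

lemma finite_setOf_eigenvalue_sums (hA : A.IsHermitian) (k : ℕ) :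
    {x : ℝ | ∃ s : Finset V, s.card = min k (Fintype.card V) ∧
      x = ∑ i ∈ s, hA.eigenvalues i}.Finite := by
  refine (Set.finite_range fun s : Finset V => ∑ i ∈ s, hA.eigenvalues i).subset ?_
  rintro x ⟨s, -, rfl⟩
  exact ⟨s, rfl⟩

lemma exists_sumKEig_eq_sum (hA : A.IsHermitian) (k : ℕ) :
    ∃ s : Finset V, s.card = min k (Fintype.card V) ∧
      sumKEig k A hA = ∑ i ∈ s, hA.eigenvalues i := by
  obtain ⟨s, -, hs⟩ : ∃ s ⊆ (univ : Finset V), s.card = min k (Fintype.card V) :=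
    exists_subset_card_eq (min_le_right _ _)
  refine Set.Nonempty.csSup_mem ?_ (finite_setOf_eigenvalue_sums hA k)
  exact ⟨_, s, hs, rfl⟩

lemma sum_eigenvalues_le_sumKEig (hA : A.IsHermitian) {k : ℕ} {s : Finset V}
    (hs : s.card = min k (Fintype.card V)) :
    ∑ i ∈ s, hA.eigenvalues i ≤ sumKEig k A hA :=
  le_csSup (finite_setOf_eigenvalue_sums hA k).bddAbove ⟨s, hs, rfl⟩

lemma sum_eigenvalues_eq_trace (hA : A.IsHermitian) : ∑ i, hA.eigenvalues i = A.trace := by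
  simpa using hA.trace_eq_sum_eigenvalues.symm

-- Truncated subtraction is intended: for `k ≥ n` the bound reads `trace A ≤ sumKEig k A`.
lemma trace_sub_sumKEig_le (hA : A.IsHermitian) (k : ℕ) :
    A.trace - sumKEig k A hA ≤
      ((Fintype.card V - k : ℕ) : ℝ) * (sumKEig (k + 1) A hA - sumKEig k A hA) := by
  obtain ⟨s, hs, hsum⟩ := exists_sumKEig_eq_sum hA k
  have eigenvalue_le : ∀ j ∈ sᶜ,
      hA.eigenvalues j ≤ sumKEig (k + 1) A hA - sumKEig k A hA := by
    intro j hj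
    have hjs : j ∉ s := mem_compl.1 hj
    have hcard : (insert j s).card = min (k + 1) (Fintype.card V) := by
      have := (insert j s).card_le_univ
      rw [card_insert_of_notMem hjs] at this ⊢
      omega
    have hinsert := sum_eigenvalues_le_sumKEig hA hcard
    rw [sum_insert hjs, ← hsum] at hinsert
    linarith
  have hcompl : sᶜ.card = Fintype.card V - k := by
    rw [card_compl, hs]
    omega
  calc A.trace - sumKEig k A hA = ∑ j ∈ sᶜ, hA.eigenvalues j := by
        rw [← sum_eigenvalues_eq_trace hA, ← sum_add_sum_compl s, hsum, add_sub_cancel_left]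
    _ ≤ sᶜ.card • (sumKEig (k + 1) A hA - sumKEig k A hA) := sum_le_card_nsmul _ _ _ eigenvalue_le
    _ = _ := by rw [hcompl, nsmul_eq_mul]

lemma trace_le_sumKEig (hA : A.IsHermitian) {k : ℕ} (hk : Fintype.card V ≤ k) :
    A.trace ≤ sumKEig k A hA := by
  simpa [Nat.sub_eq_zero_of_le hk] using trace_sub_sumKEig_le hA k

lemma sumKEig_nonneg (hA : A.IsHermitian) (htr : 0 ≤ A.trace) (k : ℕ) :
    0 ≤ sumKEig k A hA := by
  induction k with
  | zero => simpa using sum_eigenvalues_le_sumKEig hA (k := 0) (s := ∅) (by simp)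
  | succ k ih =>
    rcases le_or_gt (Fintype.card V) k with hk | hk
    · exact htr.trans (trace_le_sumKEig hA (hk.trans k.le_succ))
    · have hm : (1 : ℝ) ≤ (Fintype.card V - k : ℕ) :=
        Nat.one_le_cast.2 (Nat.sub_pos_of_lt hk)
      refine nonneg_of_mul_nonneg_right ?_ (zero_lt_one.trans_le hm)
      linarith [trace_sub_sumKEig_le hA k, mul_nonneg (sub_nonneg.2 hm) ih]

lemma sumKEig_le_trace_of_posSemidef (hA : A.PosSemidef) (k : ℕ) :
    sumKEig k A hA.isHermitian ≤ A.trace := by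
  obtain ⟨s, -, hsum⟩ := exists_sumKEig_eq_sum hA.isHermitian k
  rw [hsum, ← sum_eigenvalues_eq_trace hA.isHermitian]
  exact sum_le_univ_sum_of_nonneg hA.eigenvalues_nonneg

end SumKEig

section GTheta

variable {V : Type*}

/-- The feasible set `𝒜(G)` of the minimization defining `gtheta`. For real matrices
`Matrix.IsHermitian` is symmetry. -/
def thetaMatrices (G : SimpleGraph V) : Set (Matrix V V ℝ) :=
  {A | A.IsHermitian ∧ ∀ i j, ¬ G.Adj i j → A i j = 1}

lemma allOnes_mem_thetaMatrices (G : SimpleGraph V) :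
    (Matrix.of fun _ _ : V => (1 : ℝ)) ∈ thetaMatrices G :=
  ⟨Matrix.IsHermitian.ext fun _ _ => rfl, fun _ _ _ => rfl⟩

lemma posSemidef_allOnes [Finite V] : (Matrix.of fun _ _ : V => (1 : ℝ)).PosSemidef := by
  simpa [Matrix.vecMulVec] using Matrix.posSemidef_vecMulVec_self_star fun _ : V => (1 : ℝ)

variable [Fintype V] {G : SimpleGraph V} {A : Matrix V V ℝ}

lemma trace_eq_card_of_mem_thetaMatrices (hA : A ∈ thetaMatrices G) :
    A.trace = Fintype.card V := by
  simp [Matrix.trace, hA.2 _ _ G.irrefl]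

variable [DecidableEq V]

lemma gtheta_le_sumKEig (hA : A ∈ thetaMatrices G) (k : ℕ) :
    gtheta k G ≤ sumKEig k A hA.1 := by
  refine csInf_le ⟨0, ?_⟩ ⟨A, hA.1, hA.2, rfl⟩
  rintro x ⟨B, hB, hBG, rfl⟩
  have htr : B.trace = Fintype.card V := trace_eq_card_of_mem_thetaMatrices ⟨hB, hBG⟩
  exact sumKEig_nonneg hB (htr ▸ Nat.cast_nonneg _) k

lemma le_gtheta {k : ℕ} {c : ℝ}
    (hc : ∀ (A : Matrix V V ℝ) (hA : A ∈ thetaMatrices G), c ≤ sumKEig k A hA.1) :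
    c ≤ gtheta k G := by
  have hJ := allOnes_mem_thetaMatrices G
  refine le_csInf ⟨_, _, hJ.1, hJ.2, rfl⟩ ?_
  rintro x ⟨A, hA, hAG, rfl⟩
  exact hc A ⟨hA, hAG⟩

variable (G)

lemma gtheta_le_card (k : ℕ) : gtheta k G ≤ Fintype.card V :=
  calc gtheta k G ≤ sumKEig k _ (allOnes_mem_thetaMatrices G).1 :=
        gtheta_le_sumKEig (allOnes_mem_thetaMatrices G) k
    _ ≤ (Matrix.of fun _ _ : V => (1 : ℝ)).trace :=
        sumKEig_le_trace_of_posSemidef posSemidef_allOnes k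
    _ = Fintype.card V := trace_eq_card_of_mem_thetaMatrices (allOnes_mem_thetaMatrices G)

lemma gtheta_eq_card {k : ℕ} (hk : Fintype.card V ≤ k) : gtheta k G = Fintype.card V :=
  (gtheta_le_card G k).antisymm <| le_gtheta fun _ hA =>
    (trace_eq_card_of_mem_thetaMatrices hA).ge.trans (trace_le_sumKEig hA.1 hk)

lemma card_sub_gtheta_le (k : ℕ) :
    Fintype.card V - gtheta k G ≤
      ((Fintype.card V - k : ℕ) : ℝ) * (gtheta (k + 1) G - gtheta k G) := by
  rcases le_or_gt (Fintype.card V) k with hk | hk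
  · simp [gtheta_eq_card G hk, Nat.sub_eq_zero_of_le hk]
  set m : ℝ := ((Fintype.card V - k : ℕ) : ℝ) with hm_def
  have hm : 1 ≤ m := Nat.one_le_cast.2 (Nat.sub_pos_of_lt hk)
  have hm_pos : 0 < m := zero_lt_one.trans_le hm
  -- Since `m - 1 ≥ 0`, replacing `sumKEig k A` by its lower bound `gtheta k G` is sound once the
  -- matrix inequality is solved for `sumKEig (k + 1) A`.
  have hdiv : (Fintype.card V + (m - 1) * gtheta k G) / m ≤ gtheta (k + 1) G := by
    refine le_gtheta fun A hA => (div_le_iff₀' hm_pos).2 ?_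
    have hstep := trace_sub_sumKEig_le hA.1 k
    rw [trace_eq_card_of_mem_thetaMatrices hA, ← hm_def] at hstep
    have hmul := mul_le_mul_of_nonneg_left (gtheta_le_sumKEig hA k) (sub_nonneg.2 hm)
    linarith
  rw [div_le_iff₀' hm_pos] at hdiv
  linarith

lemma monotone_gtheta : Monotone fun k => gtheta k G := by
  refine monotone_nat_of_le_succ fun k => ?_
  rcases le_or_gt (Fintype.card V) k with hk | hk
  · rw [gtheta_eq_card G hk, gtheta_eq_card G (hk.trans k.le_succ)]
  · have hm : (0 : ℝ) < (Fintype.card V - k : ℕ) :=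
      Nat.cast_pos.2 (Nat.sub_pos_of_lt hk)
    have hgap : 0 ≤ ((Fintype.card V - k : ℕ) : ℝ) * (gtheta (k + 1) G - gtheta k G) :=
      (sub_nonneg.2 (gtheta_le_card G k)).trans (card_sub_gtheta_le G k)
    exact sub_nonneg.1 (nonneg_of_mul_nonneg_right hgap hm)

end GTheta

theorem stmt_1 {V : Type*} [Fintype V] [DecidableEq V] (G : SimpleGraph V)
    (n : ℕ) (hn : Fintype.card V = n) (k : ℕ) (hk : 1 ≤ k) :
    gtheta k G ≤ gtheta (k + 1) G ∧
    (gtheta k G = gtheta (k + 1) G ↔ gtheta k G = (n : ℝ)) := by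
  subst hn
  have hmono : gtheta k G ≤ gtheta (k + 1) G := monotone_gtheta G k.le_succ
  refine ⟨hmono, fun heq => ?_, fun hcard => ?_⟩
  · have hgap := card_sub_gtheta_le G k
    rw [← heq, sub_self, mul_zero] at hgap
    exact (gtheta_le_card G k).antisymm (sub_nonpos.1 hgap)
  · exact hmono.antisymm (hcard ▸ gtheta_le_card G (k + 1))
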